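/- Let 0 < β ≤ 1 and 0 < r < 1/2 be real numbers, and let B(β,r) = {(α₁,α₂) ∈ ℝ² : α₁ ≥ 0, α₂ ≥ 0, (1-β)·max([1-α₁]₊, [1-α₂]₊) + β·[1-α₁]₊ ≤ r}. Then the infimum of α₁ + α₂ over B(β,r) equals 2(1-r) if β < 1/2; equals 2 - r/(1-β) if 1/2 ≤ β < 1-r; and equals (1-r)/β if β ≥ 1-r. -/

import Mathlib

open Set

/-!
In the gains `x = [1 - α₁]₊`, `y = [1 - α₂]₊` the outage condition splits into the two linear
constraints `x ≤ r` and `(1 - β) y + β x ≤ r`, and minimizing `α₁ + α₂` becomes the linear program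
of maximizing `x + y` over `0 ≤ x ≤ r`, `0 ≤ y ≤ 1`, `(1 - β) y + β x ≤ r`. Each of the three
regimes selects a vertex on the last constraint: the second tight constraint is `x = r`, `x = 0` or
`y = 1`, and adding a nonnegative multiple of it to the last one certifies optimality.
-/

section OutageRegion

variable {β r : ℝ}

/-- The outage region `B(β, r)` of the `m`-switch channel, with `p = (α₁, α₂)` and `max t 0` for
`[t]₊`. -/
def outageRegion (β r : ℝ) : Set (ℝ × ℝ) :=
  {p | 0 ≤ p.1 ∧ 0 ≤ p.2 ∧
    (1 - β) * max (max (1 - p.1) 0) (max (1 - p.2) 0) + β * max (1 - p.1) 0 ≤ r}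

/-- The polygon of gains `q = ([1 - α₁]₊, [1 - α₂]₊)` realized by the points of `outageRegion β r`.
The bound `q.1 ≤ 1` is left out: it follows from `q.1 ≤ r` for multiplexing gains `r ≤ 1`. -/
def gainRegion (β r : ℝ) : Set (ℝ × ℝ) :=
  {q | q.1 ∈ Icc 0 r ∧ q.2 ∈ Icc 0 1 ∧ (1 - β) * q.2 + β * q.1 ≤ r}

theorem one_sub_mul_max_add_mul_le_iff {x y : ℝ} (hβ : β ≤ 1) :
    (1 - β) * max x y + β * x ≤ r ↔ x ≤ r ∧ (1 - β) * y + β * x ≤ r := by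
  have diagonal : (1 - β) * x + β * x = x := by ring
  rw [mul_max_of_nonneg _ _ (sub_nonneg.2 hβ), ← max_add_add_right, max_le_iff, diagonal]

theorem gains_mem_gainRegion {p : ℝ × ℝ} (hβ : β ≤ 1) (hp : p ∈ outageRegion β r) :
    (max (1 - p.1) 0, max (1 - p.2) 0) ∈ gainRegion β r := by
  obtain ⟨-, hp₂, hout⟩ := hp
  obtain ⟨hx, hxy⟩ := (one_sub_mul_max_add_mul_le_iff hβ).1 hout
  exact ⟨⟨le_max_right _ _, hx⟩,
    ⟨le_max_right _ _, max_le (sub_le_self _ hp₂) zero_le_one⟩, hxy⟩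

theorem one_sub_mem_outageRegion {q : ℝ × ℝ} (hβ : β ≤ 1) (hr : r ≤ 1)
    (hq : q ∈ gainRegion β r) : (1 - q.1, 1 - q.2) ∈ outageRegion β r := by
  obtain ⟨⟨hx₀, hx⟩, ⟨hy₀, hy⟩, hxy⟩ := hq
  refine ⟨sub_nonneg.2 (hx.trans hr), sub_nonneg.2 hy, ?_⟩
  simpa only [sub_sub_cancel, max_eq_left hx₀, max_eq_left hy₀] using
    (one_sub_mul_max_add_mul_le_iff hβ).2 ⟨hx, hxy⟩

theorem isLeast_sum_outageRegion {s : ℝ} (hβ : β ≤ 1) (hr : r ≤ 1)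
    (hs : IsGreatest ((fun q : ℝ × ℝ => q.1 + q.2) '' gainRegion β r) s) :
    IsLeast ((fun p : ℝ × ℝ => p.1 + p.2) '' outageRegion β r) (2 - s) := by
  obtain ⟨⟨q, hq, rfl⟩, hmax⟩ := hs
  refine ⟨⟨_, one_sub_mem_outageRegion hβ hr hq, by ring⟩, ?_⟩
  rintro _ ⟨p, hp, rfl⟩
  have hgain : max (1 - p.1) 0 + max (1 - p.2) 0 ≤ q.1 + q.2 :=
    hmax (mem_image_of_mem _ (gains_mem_gainRegion hβ hp))
  linarith [le_max_left (1 - p.1) 0, le_max_left (1 - p.2) 0]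

theorem isGreatest_sum_gainRegion_of_le_half (hβ : β ≤ 1 / 2) (hr₀ : 0 ≤ r) (hr₁ : r ≤ 1) :
    IsGreatest ((fun q : ℝ × ℝ => q.1 + q.2) '' gainRegion β r) (2 * r) := by
  refine ⟨⟨(r, r), ⟨⟨hr₀, le_rfl⟩, ⟨hr₀, hr₁⟩, by linarith⟩, (two_mul r).symm⟩, ?_⟩
  rintro _ ⟨⟨x, y⟩, ⟨⟨-, hx : x ≤ r⟩, -, hxy : (1 - β) * y + β * x ≤ r⟩, rfl⟩
  have hcoeff : 0 ≤ 1 - 2 * β := by linarith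
  refine le_of_mul_le_mul_left ?_ (show 0 < 1 - β by linarith)
  calc (1 - β) * (x + y) = ((1 - β) * y + β * x) + (1 - 2 * β) * x := by ring
    _ ≤ r + (1 - 2 * β) * r := by gcongr
    _ = (1 - β) * (2 * r) := by ring

theorem isGreatest_sum_gainRegion_of_half_le_of_le_one_sub (hβ : 1 / 2 ≤ β) (hβ₁ : β < 1)
    (hr : 0 ≤ r) (hβr : β ≤ 1 - r) :
    IsGreatest ((fun q : ℝ × ℝ => q.1 + q.2) '' gainRegion β r) (r / (1 - β)) := by
  have hβ' : 0 < 1 - β := sub_pos.2 hβ₁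
  refine ⟨⟨(0, r / (1 - β)), ⟨⟨le_rfl, hr⟩, ⟨by positivity, ?_⟩, ?_⟩, zero_add _⟩, ?_⟩
  · exact (div_le_one hβ').2 (le_sub_comm.1 hβr)
  · simp only [mul_div_cancel₀ _ hβ'.ne', mul_zero, add_zero, le_refl]
  rintro _ ⟨⟨x, y⟩, ⟨⟨hx : 0 ≤ x, -⟩, -, hxy : (1 - β) * y + β * x ≤ r⟩, rfl⟩
  have hcoeff : 0 ≤ 2 * β - 1 := by linarith
  rw [le_div_iff₀' hβ']
  calc (1 - β) * (x + y) = ((1 - β) * y + β * x) - (2 * β - 1) * x := by ring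
    _ ≤ (1 - β) * y + β * x := sub_le_self _ (mul_nonneg hcoeff hx)
    _ ≤ r := hxy

theorem isGreatest_sum_gainRegion_of_half_le_of_one_sub_le (hβ : 1 / 2 ≤ β) (hβ₁ : β ≤ 1)
    (hr : r ≤ 1) (hβr : 1 - r ≤ β) :
    IsGreatest ((fun q : ℝ × ℝ => q.1 + q.2) '' gainRegion β r) (2 - (1 - r) / β) := by
  have hβ₀ : 0 < β := by linarith
  have hvertex : β * (1 - (1 - r) / β) = r - (1 - β) := by field_simp; ring
  have hx₀ : 0 ≤ 1 - (1 - r) / β := sub_nonneg.2 ((div_le_one hβ₀).2 hβr)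
  have hxr : 1 - (1 - r) / β ≤ r := sub_le_comm.1 (le_div_self (sub_nonneg.2 hr) hβ₀ hβ₁)
  refine ⟨⟨(1 - (1 - r) / β, 1), ⟨⟨hx₀, hxr⟩, ⟨zero_le_one, le_rfl⟩, by linarith⟩, by ring⟩, ?_⟩
  rintro _ ⟨⟨x, y⟩, ⟨-, ⟨-, hy : y ≤ 1⟩, hxy : (1 - β) * y + β * x ≤ r⟩, rfl⟩
  have hcoeff : 0 ≤ 2 * β - 1 := by linarith
  refine le_of_mul_le_mul_left ?_ hβ₀
  calc β * (x + y) = ((1 - β) * y + β * x) + (2 * β - 1) * y := by ring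
    _ ≤ r + (2 * β - 1) * 1 := by gcongr
    _ = β * (2 - (1 - r) / β) := by linarith

theorem stmt1_general (hβ : β ≤ 1) (hr₀ : 0 ≤ r) (hr₁ : r ≤ 1) :
    (β ≤ 1 / 2 →
      IsLeast ((fun p : ℝ × ℝ => p.1 + p.2) '' outageRegion β r) (2 * (1 - r))) ∧
    (1 / 2 ≤ β → β < 1 - r →
      IsLeast ((fun p : ℝ × ℝ => p.1 + p.2) '' outageRegion β r) (2 - r / (1 - β))) ∧
    (1 / 2 ≤ β → 1 - r ≤ β →
      IsLeast ((fun p : ℝ × ℝ => p.1 + p.2) '' outageRegion β r) ((1 - r) / β)) := by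
  refine ⟨fun hhalf => ?_, fun hhalf hβr => ?_, fun hhalf hβr => ?_⟩
  · rw [mul_sub, mul_one]
    exact isLeast_sum_outageRegion hβ hr₁ (isGreatest_sum_gainRegion_of_le_half hhalf hr₀ hr₁)
  · exact isLeast_sum_outageRegion hβ hr₁
      (isGreatest_sum_gainRegion_of_half_le_of_le_one_sub hhalf (by linarith) hr₀ hβr.le)
  · rw [← sub_sub_cancel 2 ((1 - r) / β)]
    exact isLeast_sum_outageRegion hβ hr₁
      (isGreatest_sum_gainRegion_of_half_le_of_one_sub_le hhalf hβ hr₁ hβr)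

end OutageRegion

/-- For `0 < β ≤ 1` and `0 < r < 1/2`, the infimum of `α₁ + α₂` over the outage region
`B(β,r)` equals `2(1-r)` if `β < 1/2`, `2 - r/(1-β)` if `1/2 ≤ β < 1-r`,
and `(1-r)/β` if `β ≥ 1-r`. -/
theorem stmt1 (β r : ℝ) (hβ : 0 < β) (hβ1 : β ≤ 1) (hr : 0 < r) (hr1 : r < 1/2)
    (B : Set (ℝ × ℝ))
    (hB : B = {p : ℝ × ℝ | 0 ≤ p.1 ∧ 0 ≤ p.2 ∧
      (1 - β) * max (max (1 - p.1) 0) (max (1 - p.2) 0) + β * max (1 - p.1) 0 ≤ r}) :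
    (β < 1/2 → sInf ((fun p : ℝ × ℝ => p.1 + p.2) '' B) = 2 * (1 - r)) ∧
    (1/2 ≤ β → β < 1 - r → sInf ((fun p : ℝ × ℝ => p.1 + p.2) '' B) = 2 - r / (1 - β)) ∧
    (1 - r ≤ β → sInf ((fun p : ℝ × ℝ => p.1 + p.2) '' B) = (1 - r) / β) := by
  obtain ⟨hsmall, hmid, hlarge⟩ := stmt1_general hβ1 hr.le (show r ≤ 1 by linarith)
  exact hB ▸ ⟨fun h => (hsmall h.le).csInf_eq, fun h h' => (hmid h h').csInf_eq,
    fun h => (hlarge (by linarith) h).csInf_eq⟩
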